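/- Let M ≥ 2 be an integer and let W, Y1, Y2, and X_1, …, X_M, J_1, …, J_M, Z_1, …, Z_M be random variables with values in finite sets on a common probability space. Suppose: (i) Y1 and Y2 are each deterministic functions of the tuple (X_1, …, X_M); (ii) Z_1 is a deterministic function of X_1 and also a deterministic function of the tuple (Y2, X_2, …, X_M); (iii) for each k ∈ {2, …, M}, Z_k is a deterministic function of X_k and also a deterministic function of the tuple consisting of Y1 and (X_j)_{j ≠ k}; (iv) for each k ∈ {2, …, M}, H(X_k | (J_1, …, J_M, (X_j)_{j ≠ k})) = H(X_k | J_k); and (v) I(W; Y1 | (J_1, …, J_M)) = 0. Then M·I(W; Y1) − I(W; Y2) ≤ ∑_{k=2}^M H(J_k) + (M − 1)·H(Y1) + H(X_1 | Z_1) + ∑_{k=2}^M H(X_k | Z_k). -/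

import Mathlib

/-!
Two facts about Shannon entropy carry the argument: `H_mono` (an almost sure function of `X` has
entropy at most `H X`) and `H_submod` (submodularity, i.e. conditional mutual information is
nonnegative). Every other information inequality below is a linear combination of
instances of these and of `H ≥ 0`.

Write `X` for the tuple of all relay inputs, `R` for `(X_k)_{k ≥ 2}`, `R_k` for `(X_j)_{j ≠ k}`.

* Since `Y1` and `Y2` are functions of `X`, `I(W;Y1) - I(W;Y2) ≤ I(W;Y1|Y2) ≤ H(X) - H(Y2)`.
  As `Z_1` is a function of `(Y2, R)`, knowing `(Y2, R)` leaves at most `H(X_1|Z_1)` of uncertainty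
  on `X`, so `H(X) - H(Y2) ≤ H(R) + H(X_1|Z_1) ≤ ∑_{k ≥ 2} H(X_k) + H(X_1|Z_1)`, and
  `H(X_k) ≤ H(J_k) + H(X_k|J_k)`.
* For each `k ≥ 2`, `I(W;Y1|J) = 0` gives `I(W;Y1) ≤ I(J;Y1) = H(Y1) - H(Y1|J)`, while
  `H(Y1|J) ≥ H(Y1|J,R_k) ≥ H(X_k|J,R_k) - H(X_k|Z_k) = H(X_k|J_k) - H(X_k|Z_k)`,
  because `Z_k` is a function of `(Y1, R_k)`.

Adding the first bound and the `M - 1` instances of the second, the terms `H(X_k|J_k)` cancel.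
-/

/-!
Shannon entropy, conditional entropy, and mutual information for discrete random
variables defined on a common probability space modelled by a `PMF`.
The logarithm is the natural logarithm and `0 log 0 = 0` (via `Real.negMulLog`).
-/

namespace DiamondWiretap

/-- Shannon entropy `H(X)` of a random variable `X` on the probability space `(Ω, p)`. -/
noncomputable def H {Ω S : Type*} (p : PMF Ω) (X : Ω → S) : ℝ :=
  ∑' s : S, Real.negMulLog ((p.map X) s).toReal

/-- Joint entropy `H(X, Y)`. -/
noncomputable def H2 {Ω S T : Type*} (p : PMF Ω) (X : Ω → S) (Y : Ω → T) : ℝ :=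
  H p (fun ω => (X ω, Y ω))

/-- Conditional entropy `H(X | Y) = H(X, Y) - H(Y)`. -/
noncomputable def condEnt {Ω S T : Type*} (p : PMF Ω) (X : Ω → S) (Y : Ω → T) : ℝ :=
  H2 p X Y - H p Y

/-- Mutual information `I(X; Y) = H(X) + H(Y) - H(X, Y)`. -/
noncomputable def mutInfo {Ω S T : Type*} (p : PMF Ω) (X : Ω → S) (Y : Ω → T) : ℝ :=
  H p X + H p Y - H2 p X Y

/-- Conditional mutual information `I(X; Y | Z) = H(X,Z) + H(Y,Z) - H(X,Y,Z) - H(Z)`. -/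
noncomputable def condMutInfo {Ω S T U : Type*} (p : PMF Ω)
    (X : Ω → S) (Y : Ω → T) (Z : Ω → U) : ℝ :=
  H2 p X Z + H2 p Y Z - H p (fun ω => (X ω, Y ω, Z ω)) - H p Z

/-- `Z` is almost surely a deterministic function of `X`,
i.e. `Z = φ ∘ X` on the support of `p` for some function `φ`. -/
def IsDetFnOf {Ω S T : Type*} (p : PMF Ω) (Z : Ω → T) (X : Ω → S) : Prop :=
  ∃ φ : S → T, ∀ ω ∈ p.support, Z ω = φ (X ω)

end DiamondWiretap

open DiamondWiretap

namespace DiamondWiretap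

/-! ### Probability masses of marginals -/

/-- The probability mass `P(X = s)` as a real number. -/
noncomputable def mass {Ω S : Type*} (p : PMF Ω) (X : Ω → S) (s : S) : ℝ :=
  ((p.map X) s).toReal

lemma mass_nonneg {Ω S : Type*} (p : PMF Ω) (X : Ω → S) (s : S) : 0 ≤ mass p X s :=
  ENNReal.toReal_nonneg

lemma mass_le_one {Ω S : Type*} (p : PMF Ω) (X : Ω → S) (s : S) : mass p X s ≤ 1 :=
  ENNReal.toReal_le_of_le_ofReal zero_le_one (by simpa using (p.map X).coe_le_one s)

lemma H_eq_sum {Ω S : Type*} [Fintype S] (p : PMF Ω) (X : Ω → S) :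
    H p X = ∑ s, Real.negMulLog (mass p X s) := by
  rw [H, tsum_fintype]; rfl

lemma sum_mass {Ω S : Type*} [Fintype S] (p : PMF Ω) (X : Ω → S) : ∑ s, mass p X s = 1 := by
  unfold mass
  rw [← ENNReal.toReal_sum (fun s _ => (p.map X).apply_ne_top s), ← tsum_fintype (L := .unconditional _),
    PMF.tsum_coe, ENNReal.toReal_one]

open Classical in
/-- The masses of a function `g` of `V` are the fibre sums of the masses of `V`. -/
lemma mass_comp {Ω S T : Type*} [Fintype S] (p : PMF Ω) (V : Ω → S) (g : S → T) (t : T) :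
    mass p (fun ω => g (V ω)) t = ∑ s, if g s = t then mass p V s else 0 := by
  have h : p.map (fun ω => g (V ω)) = (p.map V).map g := by
    rw [PMF.map_comp]; rfl
  unfold mass
  rw [h, PMF.map_apply, tsum_fintype, ENNReal.toReal_sum]
  · refine Finset.sum_congr rfl fun s _ => ?_
    by_cases hs : g s = t
    · simp [hs]
    · simp [hs, Ne.symm hs]
  · intro s _
    split_ifs
    · exact (p.map V).apply_ne_top s
    · simp

lemma mass_le_comp {Ω S T : Type*} [Fintype S] (p : PMF Ω) (V : Ω → S) (g : S → T) (s : S) :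
    mass p V s ≤ mass p (fun ω => g (V ω)) (g s) := by
  classical
  rw [mass_comp p V g]
  refine le_trans (by simp) (Finset.single_le_sum
    (f := fun s' => if g s' = g s then mass p V s' else 0) (fun i _ => ?_) (Finset.mem_univ s))
  split_ifs
  · exact mass_nonneg p V i
  · exact le_rfl

lemma sum_mass_pair {Ω S T : Type*} [Fintype S] [Fintype T] (p : PMF Ω) (X : Ω → S) (Y : Ω → T)
    (y : T) : ∑ x, mass p (fun ω => (X ω, Y ω)) (x, y) = mass p Y y := by
  classical
  have h := mass_comp p (fun ω => (X ω, Y ω)) Prod.snd y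
  dsimp only at h
  rw [h, Fintype.sum_prod_type]
  simp

/-- The entropy of a function of `V` as an average over the values of `V`; it puts the entropies of
all marginals of `V` under a common sum. -/
lemma H_comp {Ω S T : Type*} [Fintype S] [Fintype T] (p : PMF Ω) (V : Ω → S) (g : S → T) :
    H p (fun ω => g (V ω)) = ∑ s, mass p V s * -Real.log (mass p (fun ω => g (V ω)) (g s)) := by
  classical
  rw [H_eq_sum]
  have h : ∀ t, Real.negMulLog (mass p (fun ω => g (V ω)) t) =
      ∑ s, if g s = t then mass p V s * -Real.log (mass p (fun ω => g (V ω)) t) else 0 := by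
    intro t
    rw [Real.negMulLog, neg_mul, ← mul_neg]
    conv_lhs => rw [mass_comp p V g t, Finset.sum_mul]
    refine Finset.sum_congr rfl fun s _ => ?_
    rw [← mass_comp p V g t, ite_mul, zero_mul]
  rw [Finset.sum_congr rfl fun t _ => h t, Finset.sum_comm]
  simp

/-! ### Basic Shannon inequalities -/

lemma H_nonneg {Ω S : Type*} [Finite S] (p : PMF Ω) (X : Ω → S) : 0 ≤ H p X := by
  have := Fintype.ofFinite S
  rw [H_eq_sum]
  exact Finset.sum_nonneg fun s _ => Real.negMulLog_nonneg (mass_nonneg p X s) (mass_le_one p X s)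

lemma H_congr {Ω S : Type*} (p : PMF Ω) {X Y : Ω → S} (h : ∀ ω ∈ p.support, X ω = Y ω) :
    H p X = H p Y := by
  classical
  have : p.map X = p.map Y := by
    ext s
    rw [PMF.map_apply, PMF.map_apply]
    refine tsum_congr fun ω => ?_
    by_cases hω : ω ∈ p.support
    · rw [h ω hω]
    · have : p ω = 0 := by simpa [PMF.mem_support_iff] using hω
      simp [this]
  rw [H, H, this]

lemma H_mono {Ω S T : Type*} [Finite S] [Finite T] {p : PMF Ω} {Z : Ω → T} {X : Ω → S}
    (h : IsDetFnOf p Z X) : H p Z ≤ H p X := by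
  have := Fintype.ofFinite S
  have := Fintype.ofFinite T
  obtain ⟨φ, hφ⟩ := h
  rw [H_congr p hφ, H_comp, H_eq_sum]
  refine Finset.sum_le_sum fun s _ => ?_
  rcases (mass_nonneg p X s).eq_or_lt with h0 | h0
  · simp [← h0]
  · have := Real.log_le_log h0 (mass_le_comp p X φ s)
    rw [Real.negMulLog]
    nlinarith

/-- Submodularity of entropy, `I(X;Y|Z) ≥ 0`: apply `log t ≤ t - 1` with
`t = P(x,z) P(y,z) / (P(x,y,z) P(z))` and average. -/
lemma H_submod {Ω S T U : Type*} [Finite S] [Finite T] [Finite U] (p : PMF Ω)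
    (X : Ω → S) (Y : Ω → T) (Z : Ω → U) :
    H p (fun ω => (X ω, Y ω, Z ω)) + H p Z
      ≤ H p (fun ω => (X ω, Z ω)) + H p (fun ω => (Y ω, Z ω)) := by
  have := Fintype.ofFinite S
  have := Fintype.ofFinite T
  have := Fintype.ofFinite U
  set V : Ω → S × T × U := fun ω => (X ω, Y ω, Z ω) with hV
  have e0 := H_comp p V id
  have e1 := H_comp p V (fun v => v.2.2)
  have e2 := H_comp p V (fun v => (v.1, v.2.2))
  have e3 := H_comp p V (fun v => v.2)
  have l1 := mass_le_comp p V (fun v => v.2.2)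
  have l2 := mass_le_comp p V (fun v => (v.1, v.2.2))
  have l3 := mass_le_comp p V (fun v => v.2)
  simp only [id, hV] at e0 e1 e2 e3 l1 l2 l3
  rw [← hV] at e0 e1 e2 e3 l1 l2 l3
  rw [e0, e1, e2, e3, ← Finset.sum_add_distrib, ← Finset.sum_add_distrib]
  have key : ∀ v : S × T × U,
      mass p V v * -Real.log (mass p V v) + mass p V v * -Real.log (mass p Z v.2.2) ≤
      mass p V v * -Real.log (mass p (fun ω => (X ω, Z ω)) (v.1, v.2.2)) +
        mass p V v * -Real.log (mass p (fun ω => (Y ω, Z ω)) v.2) +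
        (mass p (fun ω => (X ω, Z ω)) (v.1, v.2.2) * mass p (fun ω => (Y ω, Z ω)) v.2 /
          mass p Z v.2.2 - mass p V v) := by
    intro v
    have hb := mass_nonneg p (fun ω => (X ω, Z ω)) (v.1, v.2.2)
    have hc := mass_nonneg p (fun ω => (Y ω, Z ω)) v.2
    have hd := mass_nonneg p Z v.2.2
    rcases (mass_nonneg p V v).eq_or_lt with h0 | h0
    · rw [← h0]
      simp only [zero_mul, zero_add, sub_zero]
      positivity
    · have pb := h0.trans_le (l2 v)
      have pc := h0.trans_le (l3 v)
      have pd := h0.trans_le (l1 v)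
      generalize mass p V v = a at *
      generalize mass p (fun ω => (X ω, Z ω)) (v.1, v.2.2) = b at *
      generalize mass p (fun ω => (Y ω, Z ω)) v.2 = c at *
      generalize mass p Z v.2.2 = d at *
      have hlog := Real.log_le_sub_one_of_pos (show 0 < b * c / d / a by positivity)
      rw [Real.log_div (by positivity) h0.ne', Real.log_div (by positivity) pd.ne',
        Real.log_mul pb.ne' pc.ne'] at hlog
      have := mul_le_mul_of_nonneg_left hlog h0.le
      have ha : a * (b * c / d / a - 1) = b * c / d - a := by field_simp
      linarith
  have tot : ∑ v : S × T × U, (mass p (fun ω => (X ω, Z ω)) (v.1, v.2.2) *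
      mass p (fun ω => (Y ω, Z ω)) v.2 / mass p Z v.2.2 - mass p V v) = 0 := by
    rw [Finset.sum_sub_distrib, sum_mass, sub_eq_zero, Fintype.sum_prod_type]
    simp only [Fintype.sum_prod_type]
    rw [Finset.sum_comm, ← sum_mass p (fun ω => (Y ω, Z ω)), Fintype.sum_prod_type]
    refine Finset.sum_congr rfl fun y _ => ?_
    rw [Finset.sum_comm]
    refine Finset.sum_congr rfl fun z _ => ?_
    rw [← Finset.sum_div, ← Finset.sum_mul, sum_mass_pair]
    rcases (mass_nonneg p Z z).eq_or_lt with h0 | h0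
    -- `P(z) = 0` forces `P(y,z) = 0`, so the junk value of the quotient is the right one.
    · have h1 := mass_le_comp p (fun ω => (Y ω, Z ω)) Prod.snd (y, z)
      have h2 := mass_nonneg p (fun ω => (Y ω, Z ω)) (y, z)
      dsimp only at h1
      rw [← h0] at h1 ⊢
      simp [le_antisymm h1 h2]
    · field_simp
  refine (Finset.sum_le_sum fun v _ => key v).trans ?_
  rw [Finset.sum_add_distrib, tot, add_zero]

lemma H_pair_le {Ω S T : Type*} [Finite S] [Finite T] (p : PMF Ω) (X : Ω → S) (Y : Ω → T) :
    H p (fun ω => (X ω, Y ω)) ≤ H p X + H p Y := by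
  have h := H_submod p X Y (fun _ => ())
  have h0 := H_nonneg p (fun _ : Ω => ())
  have h1 : H p (fun ω => (X ω, Y ω)) ≤ H p (fun ω => (X ω, Y ω, ())) :=
    H_mono ⟨fun v => (v.1, v.2.1), fun _ _ => rfl⟩
  have h2 : H p (fun ω => (X ω, ())) ≤ H p X := H_mono ⟨fun v => (v, ()), fun _ _ => rfl⟩
  have h3 : H p (fun ω => (Y ω, ())) ≤ H p Y := H_mono ⟨fun v => (v, ()), fun _ _ => rfl⟩
  linarith

lemma H_finset_le {Ω ι : Type*} {S : ι → Type*} [∀ i, Finite (S i)] (p : PMF Ω)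
    (X : (i : ι) → Ω → S i) (s : Finset ι) :
    H p (fun ω => (fun i : s => X i.1 ω)) ≤ ∑ i ∈ s, H p (X i) := by
  classical
  induction s using Finset.induction_on with
  | empty =>
    rw [Finset.sum_empty, H, tsum_fintype]
    refine le_of_eq (Finset.sum_eq_zero fun f _ => ?_)
    -- The only value of the empty tuple has probability one.
    have h := sum_mass p (fun ω => (fun i : (∅ : Finset ι) => X i.1 ω))
    rw [Fintype.sum_unique, ← Subsingleton.elim f default] at h
    change Real.negMulLog (mass p _ f) = 0
    rw [h, Real.negMulLog_one]
  | insert a s ha ih =>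
    rw [Finset.sum_insert ha]
    have h1 := H_pair_le p (X a) (fun ω => (fun i : s => X i.1 ω))
    have h2 : H p (fun ω => (fun i : (insert a s : Finset ι) => X i.1 ω)) ≤
        H p (fun ω => (X a ω, (fun i : s => X i.1 ω))) := by
      refine H_mono ⟨fun v i => if h : i.1 = a then cast (congrArg S h.symm) v.1 else
        v.2 ⟨i.1, (Finset.mem_insert.1 i.2).resolve_left h⟩, fun ω _ => ?_⟩
      funext ⟨i, hi⟩
      by_cases h : i = a
      · subst h; simp
      · simp [h]
    linarith

lemma H_pi_le {Ω ι : Type*} [Fintype ι] {S : ι → Type*} [∀ i, Finite (S i)] (p : PMF Ω)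
    (X : (i : ι) → Ω → S i) :
    H p (fun ω => (fun i => X i ω)) ≤ ∑ i, H p (X i) :=
  le_trans (H_mono ⟨fun v i => v ⟨i, Finset.mem_univ i⟩, fun _ _ => rfl⟩)
    (H_finset_le p X Finset.univ)

/-! ### Secrecy and penalty bounds -/

/-- If `Y1`, `Y2` are functions of `V` then `I(W;Y1) - I(W;Y2) ≤ H(V) - H(Y2)`. -/
lemma mutInfo_sub_le {Ω A B C D : Type*} [Finite A] [Finite B] [Finite C] [Finite D] (p : PMF Ω)
    (W : Ω → A) (Y1 : Ω → B) (Y2 : Ω → C) (V : Ω → D)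
    (h1 : IsDetFnOf p Y1 V) (h2 : IsDetFnOf p Y2 V) :
    mutInfo p W Y1 - mutInfo p W Y2 ≤ H p V - H p Y2 := by
  have s := H_submod p W V Y1
  have m1 : H p (fun ω => (V ω, Y1 ω)) ≤ H p V := by
    obtain ⟨φ, hφ⟩ := h1
    exact H_mono ⟨fun v => (v, φ v), fun ω h => by simp [hφ ω h]⟩
  have m2 : H p (fun ω => (W ω, Y2 ω)) ≤ H p (fun ω => (W ω, V ω, Y1 ω)) := by
    obtain ⟨φ, hφ⟩ := h2
    exact H_mono ⟨fun v => (v.1, φ v.2.1), fun ω h => by simp [hφ ω h]⟩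
  simp only [mutInfo, H2]
  linarith

/-- If `Z` is a function of `V`, then `H(X|V) ≤ H(X|Z)`, here in the form
`H(X,V) ≤ H(V) + H(X|Z)`. -/
lemma H_pair_le_condEnt {Ω A B C : Type*} [Finite A] [Finite B] [Finite C] (p : PMF Ω)
    (X : Ω → A) (V : Ω → B) (Z : Ω → C) (h : IsDetFnOf p Z V) :
    H p (fun ω => (X ω, V ω)) ≤ H p V + condEnt p X Z := by
  have s := H_submod p X V Z
  have m1 : H p (fun ω => (V ω, Z ω)) ≤ H p V := by
    obtain ⟨φ, hφ⟩ := h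
    exact H_mono ⟨fun v => (v, φ v), fun ω h => by simp [hφ ω h]⟩
  have m2 : H p (fun ω => (X ω, V ω)) ≤ H p (fun ω => (X ω, V ω, Z ω)) :=
    H_mono ⟨fun v => (v.1, v.2.1), fun _ _ => rfl⟩
  simp only [condEnt, H2]
  linarith

/-- The penalty bound for one relay: if `I(W;Y|J) = 0` and `Z` is a function of `(Y, R)`, then
`I(W;Y) ≤ H(Y) - H(X|J,R) + H(X|Z)`. -/
lemma mutInfo_le {Ω A B C D E F : Type*} [Finite A] [Finite B] [Finite C] [Finite D] [Finite E]
    [Finite F] (p : PMF Ω) (W : Ω → A) (Y : Ω → B) (J : Ω → C) (R : Ω → D) (X : Ω → E) (Z : Ω → F)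
    (hW : condMutInfo p W Y J = 0) (hZ : IsDetFnOf p Z (fun ω => (Y ω, R ω))) :
    mutInfo p W Y ≤ H p Y - condEnt p X (fun ω => (J ω, R ω)) + condEnt p X Z := by
  have s1 := H_submod p Y J W
  have m1 : H p (fun ω => (Y ω, W ω)) ≤ H p (fun ω => (W ω, Y ω)) :=
    H_mono ⟨Prod.swap, fun _ _ => rfl⟩
  have m2 : H p (fun ω => (J ω, W ω)) ≤ H p (fun ω => (W ω, J ω)) :=
    H_mono ⟨Prod.swap, fun _ _ => rfl⟩
  have m3 : H p (fun ω => (W ω, Y ω, J ω)) ≤ H p (fun ω => (Y ω, J ω, W ω)) :=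
    H_mono ⟨fun v => (v.2.2, v.1, v.2.1), fun _ _ => rfl⟩
  have s2 := H_submod p Y R J
  have m4 : H p (fun ω => (R ω, J ω)) ≤ H p (fun ω => (J ω, R ω)) :=
    H_mono ⟨Prod.swap, fun _ _ => rfl⟩
  have s3 := H_pair_le_condEnt p X (fun ω => (Y ω, R ω, J ω)) Z (by
    obtain ⟨φ, hφ⟩ := hZ
    exact ⟨fun v => φ (v.1, v.2.1), hφ⟩)
  have m5 : H p (fun ω => (X ω, J ω, R ω)) ≤ H p (fun ω => (X ω, Y ω, R ω, J ω)) :=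
    H_mono ⟨fun v => (v.1, v.2.2.2, v.2.2.1), fun _ _ => rfl⟩
  simp only [condMutInfo, mutInfo, condEnt, H2] at *
  linarith

end DiamondWiretap

/-- core entropy inequality of the converse proof of Theorem 5
(`M`-relay case, full CSI).  Relay `1` is the index of `Fin M` whose value is `0`:
`M·I(W; Y1) − I(W; Y2) ≤ ∑_{k=2}^M H(J_k) + (M−1)·H(Y1) + H(X_1|Z_1) + ∑_{k=2}^M H(X_k|Z_k)`. -/
theorem stmt9 {Ω SW T1 T2 : Type*} (M : ℕ) (hM : 2 ≤ M)
    [Fintype SW] [Fintype T1] [Fintype T2]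
    (S TJ TZ : Fin M → Type*) [∀ k, Fintype (S k)] [∀ k, Fintype (TJ k)]
    [∀ k, Fintype (TZ k)]
    (p : PMF Ω) (W : Ω → SW) (Y1 : Ω → T1) (Y2 : Ω → T2)
    (X : (k : Fin M) → Ω → S k) (J : (k : Fin M) → Ω → TJ k)
    (Z : (k : Fin M) → Ω → TZ k)
    (hY1 : IsDetFnOf p Y1 (fun ω => (fun k => X k ω : (k : Fin M) → S k)))
    (hY2 : IsDetFnOf p Y2 (fun ω => (fun k => X k ω : (k : Fin M) → S k)))
    (hZ1a : IsDetFnOf p (Z ⟨0, by omega⟩) (X ⟨0, by omega⟩))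
    (hZ1b : IsDetFnOf p (Z ⟨0, by omega⟩)
      (fun ω => (Y2 ω, fun k : {k : Fin M // (k : ℕ) ≠ 0} => X k.1 ω)))
    (hZa : ∀ k : Fin M, (k : ℕ) ≠ 0 → IsDetFnOf p (Z k) (X k))
    (hZb : ∀ k : Fin M, (k : ℕ) ≠ 0 → IsDetFnOf p (Z k)
      (fun ω => (Y1 ω, fun j : {j : Fin M // j ≠ k} => X j.1 ω)))
    (hMarkov : ∀ k : Fin M, (k : ℕ) ≠ 0 →
      condEnt p (X k)
        (fun ω => ((fun j => J j ω : (j : Fin M) → TJ j),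
                   (fun j : {j : Fin M // j ≠ k} => X j.1 ω)))
        = condEnt p (X k) (J k))
    (hMarkovW : condMutInfo p W Y1
      (fun ω => (fun k => J k ω : (k : Fin M) → TJ k)) = 0) :
    (M : ℝ) * mutInfo p W Y1 - mutInfo p W Y2
      ≤ (∑ k : {k : Fin M // (k : ℕ) ≠ 0}, H p (J k.1))
        + ((M : ℝ) - 1) * H p Y1
        + condEnt p (X ⟨0, by omega⟩) (Z ⟨0, by omega⟩)
        + ∑ k : {k : Fin M // (k : ℕ) ≠ 0}, condEnt p (X k.1) (Z k.1) := by
  have hA := mutInfo_sub_le p W Y1 Y2 _ hY1 hY2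
  -- Conditioning on the tuple `(Y2, R)`, of which `Z_1` is a function.
  have hA2 := H_pair_le_condEnt p (X ⟨0, by omega⟩) _ (Z ⟨0, by omega⟩) hZ1b
  have hA3 := H_pair_le p Y2 (fun ω => fun k : {k : Fin M // (k : ℕ) ≠ 0} => X k.1 ω)
  -- The tuple of all inputs is recovered by gluing the first input to the others.
  have hA4 : H p (fun ω => (fun k => X k ω : (k : Fin M) → S k)) ≤
      H p (fun ω => (X ⟨0, by omega⟩ ω, Y2 ω,
        fun k : {k : Fin M // (k : ℕ) ≠ 0} => X k.1 ω)) := by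
    refine H_mono ⟨fun v k => if h : k = ⟨0, by omega⟩ then h ▸ v.1 else
      v.2.2 ⟨k, fun h' => h (Fin.ext h')⟩, fun ω _ => ?_⟩
    funext k
    by_cases h : k = ⟨0, by omega⟩
    · subst h; simp
    · simp [h]
  have hA5 := H_pi_le p (fun k : {k : Fin M // (k : ℕ) ≠ 0} => X k.1)
  have hX : ∀ k : {k : Fin M // (k : ℕ) ≠ 0},
      H p (X k.1) ≤ H p (J k.1) + condEnt p (X k.1) (J k.1) := by
    intro k
    have : H p (X k.1) ≤ H p (fun ω => (X k.1 ω, J k.1 ω)) :=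
      H_mono ⟨Prod.fst, fun _ _ => rfl⟩
    simp only [condEnt, H2]
    linarith
  have hB : ∀ k : {k : Fin M // (k : ℕ) ≠ 0}, mutInfo p W Y1 ≤
      H p Y1 - condEnt p (X k.1) (J k.1) + condEnt p (X k.1) (Z k.1) := by
    intro k
    rw [← hMarkov k.1 k.2]
    exact mutInfo_le p W Y1 _ _ (X k.1) (Z k.1) hMarkovW (hZb k.1 k.2)
  have hcard : ((Fintype.card {k : Fin M // (k : ℕ) ≠ 0} : ℕ) : ℝ) = (M : ℝ) - 1 := by
    have h : Fintype.card {k : Fin M // (k : ℕ) ≠ 0} = M - 1 := by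
      have e : ∀ k : Fin M, (k : ℕ) ≠ 0 ↔ ¬ k = ⟨0, by omega⟩ := fun k => by
        rw [Fin.ext_iff]
      rw [Fintype.card_congr (Equiv.subtypeEquivRight e), Fintype.card_subtype_compl]
      simp
    rw [h, Nat.cast_sub (by omega), Nat.cast_one]
  have hXs := Finset.sum_le_sum fun k (_ : k ∈ Finset.univ) => hX k
  have hBs := Finset.sum_le_sum fun k (_ : k ∈ Finset.univ) => hB k
  simp only [Finset.sum_add_distrib, Finset.sum_sub_distrib, Finset.sum_const, Finset.card_univ,
    nsmul_eq_mul, hcard] at hXs hBs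
  linarith
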